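/- The Tutte polynomials T_n^{(r)}(x,y) of the contracted complete graphs K_{n/r} satisfy, for all integers n > r ≥ 1, the recurrence T_n^{(r)}(x,y) = ∑_{s=1}^{n−r} binom(n−r, s) · [r]_y^s · y^{binom(s,2)} · T_{n−r}^{(s)}(x,y) + (x−1)·T_{n−r}^{(1)}(x,y), where [r]_y = 1 + y + ... + y^{r−1}. -/

import Mathlib

open Finset

/-- The simple graph on `V` underlying the spanning subgraph of the multigraph
`ε : E → Sym2 V` determined by the edge subset `F`. -/
def edgeGraph {V E : Type*} (ε : E → Sym2 V) (F : Finset E) : SimpleGraph V :=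
  SimpleGraph.fromRel (fun a b => ∃ e ∈ F, ε e = s(a, b))

/-- Number of connected components of the spanning subgraph `F`. -/
noncomputable def nComp {V E : Type*} (ε : E → Sym2 V) (F : Finset E) : ℕ :=
  Nat.card (edgeGraph ε F).ConnectedComponent

/-- The Tutte polynomial (evaluated at integers `x`, `y`) of the multigraph with vertex
set `V` and edges indexed by `E` with endpoints `ε`:
`T(x,y) = ∑_H (x-1)^(c(H)-1) (y-1)^(e(H)+c(H)-v(H))`, the sum running over all spanning
subgraphs `H` (edge subsets). -/
noncomputable def tutte {V E : Type*} [Fintype V] [Fintype E] [DecidableEq E]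
    (ε : E → Sym2 V) (x y : ℤ) : ℤ :=
  ∑ F : Finset E,
    (x - 1) ^ (nComp ε F - 1) * (y - 1) ^ (F.card + nComp ε F - Fintype.card V)

/-- Edge-endpoint map of the contracted complete graph `K_{n/r}` where `m = n - r`:
one hub vertex `none` (the contraction of the `r` vertices), `m` other vertices,
`r` parallel edges from the hub to each other vertex, and a complete graph on the
`m` other vertices. -/
def KCedge (r m : ℕ) :
    (Fin r × Fin m) ⊕ {p : Fin m × Fin m // p.1 < p.2} → Sym2 (Option (Fin m)) :=
  Sum.elim (fun ik => s((none : Option (Fin m)), some ik.2))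
    (fun p => s(some p.1.1, some p.1.2))

/-- `Tutte n r x y` is the Tutte polynomial `T_n^{(r)}(x,y)` of `K_{n/r}` (for `n ≥ r`). -/
noncomputable def TutteKC (n r : ℕ) (x y : ℤ) : ℤ :=
  tutte (KCedge r (n - r)) x y

/-- adjacency relation of the edge subset `F` -/
def erel {V E : Type*} (ε : E → Sym2 V) (F : Finset E) (a b : V) : Prop :=
  ∃ e ∈ F, ε e = s(a, b)

theorem quot_card_eq {V W : Type*} {r : V → V → Prop} {r' : W → W → Prop}
    (f : V → W) (g : W → V)
    (hf : ∀ a b, r a b → Quot.mk r' (f a) = Quot.mk r' (f b))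
    (hg : ∀ a b, r' a b → Quot.mk r (g a) = Quot.mk r (g b))
    (hgf : ∀ a, Quot.mk r (g (f a)) = Quot.mk r a)
    (hfg : ∀ b, Quot.mk r' (f (g b)) = Quot.mk r' b) :
    Nat.card (Quot r) = Nat.card (Quot r') := by
  refine Nat.card_congr
    { toFun := Quot.lift (fun a => Quot.mk r' (f a)) hf
      invFun := Quot.lift (fun a => Quot.mk r (g a)) hg
      left_inv := ?_
      right_inv := ?_ }
  · rintro ⟨a⟩; exact hgf a
  · rintro ⟨a⟩; exact hfg a

theorem nComp_eq {V E : Type*} (ε : E → Sym2 V) (F : Finset E) :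
    nComp ε F = Nat.card (Quot (erel ε F)) := by
  unfold nComp SimpleGraph.ConnectedComponent
  apply quot_card_eq id id
  · rintro a b ⟨p⟩
    induction p with
    | nil => rfl
    | cons h p ih =>
      refine Eq.trans ?_ ih
      simp only [edgeGraph, SimpleGraph.fromRel_adj] at h
      rcases h.2 with h | h
      · exact Quot.sound h
      · exact (Quot.sound h).symm
  · intro a b h
    by_cases hab : a = b
    · subst hab; rfl
    · apply Quot.sound
      apply SimpleGraph.Adj.reachable
      simp only [edgeGraph, SimpleGraph.fromRel_adj]
      exact ⟨hab, Or.inl h⟩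
  · intro a; rfl
  · intro a; rfl

theorem nComp_pos {V E : Type*} [Finite V] [Nonempty V] (ε : E → Sym2 V) (F : Finset E) :
    1 ≤ nComp ε F := by
  rw [nComp_eq]
  have : Nonempty (Quot (erel ε F)) := ⟨Quot.mk _ (Classical.arbitrary V)⟩
  exact Nat.card_pos

theorem card_le_nComp {V E : Type*} [Fintype V] (ε : E → Sym2 V) (F : Finset E) :
    Fintype.card V ≤ F.card + nComp ε F := by
  classical
  induction F using Finset.induction_on with
  | empty =>
    rw [nComp_eq, ← Nat.card_eq_fintype_card]
    simp only [card_empty, zero_add]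
    apply Nat.card_le_card_of_injective (Quot.mk _ : V → Quot (erel ε (∅ : Finset E)))
    intro a b h
    have := congrArg (Quot.lift (id : V → V) (by rintro a b ⟨e, he, _⟩; simp at he)) h
    exact this
  | insert e F he ih =>
    rw [Finset.card_insert_of_notMem he]
    rw [nComp_eq] at ih ⊢
    obtain ⟨⟨a, b⟩, hab⟩ : ∃ p : V × V, ε e = s(p.1, p.2) := by
      induction h : ε e with
      | h a b => exact ⟨(a, b), rfl⟩
    simp only at hab
    have key : Nat.card (Quot (erel ε F)) ≤ Nat.card (Option (Quot (erel ε (insert e F)))) := by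
      let g : V → Quot (erel ε F) := fun v =>
        if Quot.mk (erel ε F) v = Quot.mk _ a then Quot.mk _ b else Quot.mk _ v
      have hg : ∀ u v, erel ε (insert e F) u v → g u = g v := by
        rintro u v ⟨e', he', h⟩
        rcases Finset.mem_insert.1 he' with rfl | he'
        · rw [hab] at h
          rcases Sym2.eq_iff.1 h with ⟨rfl, rfl⟩ | ⟨rfl, rfl⟩ <;> simp [g]
        · have : Quot.mk (erel ε F) u = Quot.mk _ v := Quot.sound ⟨e', he', h⟩
          simp only [g, this]
      let G : Option (Quot (erel ε (insert e F))) → Quot (erel ε F) := fun o =>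
        o.elim (Quot.mk _ a) (Quot.lift g hg)
      apply Nat.card_le_card_of_surjective G
      rintro ⟨v⟩
      by_cases hv : Quot.mk (erel ε F) v = Quot.mk _ a
      · exact ⟨none, hv.symm⟩
      · refine ⟨some (Quot.mk _ v), ?_⟩
        change g v = _
        simp only [g, if_neg hv]
    rw [Finite.card_option] at key
    omega

theorem tutte_congr {V E V' E' : Type*} [Fintype V] [Fintype E] [DecidableEq E]
    [Fintype V'] [Fintype E'] [DecidableEq E'] (ε : E → Sym2 V) (ε' : E' → Sym2 V')
    (f : V ≃ V') (h : E ≃ E') (H : ∀ e, ε' (h e) = Sym2.map f (ε e)) (x y : ℤ) :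
    tutte ε x y = tutte ε' x y := by
  unfold tutte
  refine Fintype.sum_equiv h.finsetCongr _ _ ?_
  intro F
  have hc : nComp ε F = nComp ε' (h.finsetCongr F) := by
    rw [nComp_eq, nComp_eq]
    apply quot_card_eq f f.symm
    · rintro a b ⟨e, he, hab⟩
      refine Quot.sound ⟨h e, by simpa using he, ?_⟩
      rw [H, hab]; rfl
    · rintro a b ⟨e, he, hab⟩
      refine Quot.sound ⟨h.symm e, ?_, ?_⟩
      · simp only [Equiv.finsetCongr_apply, mem_map_equiv] at he
        exact he
      · have := H (h.symm e)
        rw [Equiv.apply_symm_apply, hab] at this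
        have h2 := congrArg (Sym2.map f.symm) this
        rw [Sym2.map_map] at h2
        simpa using h2.symm
    · intro a; simp
    · intro a; simp
  rw [hc, Fintype.card_congr f]
  simp

theorem sum_finset_pow_card (E : Type*) [Fintype E] [DecidableEq E] (y : ℤ) :
    ∑ F : Finset E, (y - 1) ^ F.card = y ^ Fintype.card E := by
  have := Fintype.sum_pow_mul_eq_add_pow E (y - 1) 1
  simpa using this

theorem tutte_loops {V E E' : Type*} [Fintype V] [Fintype E] [DecidableEq E]
    [Fintype E'] [DecidableEq E'] (ε : E ⊕ E' → Sym2 V)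
    (H : ∀ e, (ε (Sum.inl e)).IsDiag) (x y : ℤ) :
    tutte ε x y = y ^ Fintype.card E * tutte (fun e => ε (Sum.inr e)) x y := by
  unfold tutte
  rw [← sum_finset_pow_card, Finset.sum_mul_sum, ← Fintype.sum_prod_type']
  refine Fintype.sum_equiv Finset.sumEquiv.toEquiv _ _ ?_
  intro F
  have hc : nComp ε F = nComp (fun e => ε (Sum.inr e)) F.toRight := by
    rw [nComp_eq, nComp_eq]
    apply quot_card_eq id id
    · rintro a b ⟨e | e, he, hab⟩
      · have := H e
        rw [hab] at this
        simp only [Sym2.mk_isDiag_iff] at this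
        rw [this]
      · exact Quot.sound ⟨e, by simpa using he, hab⟩
    · rintro a b ⟨e, he, hab⟩
      exact Quot.sound ⟨Sum.inr e, by simpa using he, hab⟩
    · intro a; rfl
    · intro a; rfl
  have h1 := card_le_nComp (fun e => ε (Sum.inr e)) F.toRight
  have h2 := F.card_toLeft_add_card_toRight
  rw [hc]
  change _ = (y - 1) ^ F.toLeft.card * ((x - 1) ^ (nComp _ F.toRight - 1) *
    (y - 1) ^ (F.toRight.card + nComp _ F.toRight - Fintype.card V))
  rw [show F.card + nComp (fun e => ε (Sum.inr e)) F.toRight - Fintype.card V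
    = F.toLeft.card + (F.toRight.card + nComp (fun e => ε (Sum.inr e)) F.toRight
      - Fintype.card V) by omega, pow_add]
  ring

theorem exists_equiv_of_range {A B C : Type*} (φ : A → C) (ψ : B → C)
    (hφ : Function.Injective φ) (hψ : Function.Injective ψ) (h : Set.range φ = Set.range ψ) :
    ∃ e : A ≃ B, ∀ a, ψ (e a) = φ a := by
  refine ⟨(Equiv.ofInjective φ hφ).trans ((Equiv.setCongr h).trans
    (Equiv.ofInjective ψ hψ).symm), fun a => ?_⟩
  simp [Equiv.apply_ofInjective_symm]

/-- edges of the complete graph on `Fin m` -/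
abbrev EK (m : ℕ) := {p : Fin m × Fin m // p.1 < p.2}

/-- endpoints in the complete graph -/
def kedge (m : ℕ) (p : EK m) : Sym2 (Fin m) := s(p.1.1, p.1.2)

theorem kedge_inj (m : ℕ) : Function.Injective (kedge m) := by
  rintro ⟨⟨a, b⟩, h⟩ ⟨⟨c, d⟩, h'⟩ H
  simp only [kedge, Sym2.eq_iff] at H h h'
  rcases H with ⟨rfl, rfl⟩ | ⟨rfl, rfl⟩
  · rfl
  · exact absurd h (not_lt.2 h'.le)

theorem kedge_range (m : ℕ) (a b : Fin m) (h : a ≠ b) : ∃ p, kedge m p = s(a, b) := by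
  rcases lt_or_gt_of_ne h with h | h
  · exact ⟨⟨(a, b), h⟩, rfl⟩
  · exact ⟨⟨(b, a), h⟩, Sym2.eq_swap⟩

theorem kedge_not_diag (m : ℕ) (p : EK m) : ¬ (kedge m p).IsDiag := by
  simp only [kedge, Sym2.mk_isDiag_iff]
  exact p.2.ne

theorem card_EK (m : ℕ) : Fintype.card (EK m) = m.choose 2 := by
  have h := Sym2.card_subtype_not_diag (α := Fin m)
  rw [Fintype.card_fin] at h
  rw [← h]
  refine Fintype.card_of_bijective (f := fun p : EK m =>
    (⟨kedge m p, kedge_not_diag m p⟩ : {a : Sym2 (Fin m) // ¬ a.IsDiag})) ⟨?_, ?_⟩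
  · intro p q h
    exact kedge_inj m (congrArg Subtype.val h)
  · rintro ⟨e, he⟩
    induction e with
    | h a b =>
      obtain ⟨p, hp⟩ := kedge_range m a b (by simpa using he)
      exact ⟨p, Subtype.ext hp⟩

/-- the contraction map -/
def contr {s t m : ℕ} (σ : Fin s ⊕ Fin t ≃ Fin m) (v : Fin m) : Option (Fin t) :=
  Sum.elim (fun _ => none) some (σ.symm v)

/-- decomposed edges -/
def dedge (s t : ℕ) : EK s ⊕ ((Fin s × Fin t) ⊕ EK t) → Sym2 (Fin s ⊕ Fin t) :=
  Sum.elim (fun e => Sym2.map Sum.inl (kedge s e))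
    (Sum.elim (fun ik => s(Sum.inl ik.1, Sum.inr ik.2)) (fun e => Sym2.map Sum.inr (kedge t e)))

theorem dedge_inj (s t : ℕ) : Function.Injective (dedge s t) := by
  rintro (e | ⟨i, k⟩ | e) (e' | ⟨i', k'⟩ | e') h
  · have := Sym2.map.injective (Sum.inl_injective (β := Fin t)) (a₁ := kedge s e) (a₂ := kedge s e') h
    rw [kedge_inj s this]
  · simp [dedge, kedge] at h
  · simp [dedge, kedge] at h
  · simp [dedge, kedge] at h
  · simpa [dedge, kedge] using h
  · simp [dedge, kedge] at h
  · simp [dedge, kedge] at h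
  · simp [dedge, kedge] at h
  · have := Sym2.map.injective (Sum.inr_injective (α := Fin s)) (a₁ := kedge t e) (a₂ := kedge t e') h
    rw [kedge_inj t this]

theorem dedge_not_diag (s t : ℕ) (z) : ¬ (dedge s t z).IsDiag := by
  rcases z with e | ⟨i, k⟩ | e
  · simpa [dedge, kedge] using e.2.ne
  · simp [dedge]
  · simpa [dedge, kedge] using e.2.ne

theorem dedge_range (s t : ℕ) (a b : Fin s ⊕ Fin t) (h : a ≠ b) :
    ∃ p, dedge s t p = s(a, b) := by
  rcases a with a | a <;> rcases b with b | b
  · obtain ⟨p, hp⟩ := kedge_range s a b (by simpa using h)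
    exact ⟨Sum.inl p, by simp [dedge, hp]⟩
  · exact ⟨Sum.inr (Sum.inl (a, b)), rfl⟩
  · exact ⟨Sum.inr (Sum.inl (b, a)), Sym2.eq_swap⟩
  · obtain ⟨p, hp⟩ := kedge_range t a b (by simpa using h)
    exact ⟨Sum.inr (Sum.inr p), by simp [dedge, hp]⟩

theorem tutte_contr {s t m : ℕ} (σ : Fin s ⊕ Fin t ≃ Fin m) (x y : ℤ) :
    tutte (fun e : EK m => Sym2.map (contr σ) (kedge m e)) x y
      = y ^ s.choose 2 * tutte (KCedge s t) x y := by
  obtain ⟨e, he⟩ := exists_equiv_of_range (fun z => Sym2.map σ (dedge s t z)) (kedge m)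
    ((Sym2.map.injective σ.injective).comp (dedge_inj s t)) (kedge_inj m) (by
      ext z
      induction z with
      | h a b =>
        constructor
        · rintro ⟨z, hz⟩
          apply kedge_range
          rintro rfl
          have : (Sym2.map σ (dedge s t z)).IsDiag := by
            simp only at hz
            rw [hz]; simp
          rw [Sym2.isDiag_map σ.injective] at this
          exact dedge_not_diag s t z this
        · rintro ⟨z, hz⟩
          obtain ⟨p, hp⟩ := dedge_range s t (σ.symm a) (σ.symm b) (by
            intro h
            have h := σ.symm.injective h
            subst h
            have := kedge_not_diag m z
            rw [hz] at this
            simp at this)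
          exact ⟨p, by simp [hp]⟩)
  have h1 : ∀ z, Sym2.map (contr σ) (kedge m (e z)) =
      Sym2.map (Sum.elim (fun _ => none) some) (dedge s t z) := by
    intro z
    rw [he, Sym2.map_map]
    congr 1
    ext v
    simp [contr]
  rw [← tutte_congr (fun z => Sym2.map (Sum.elim (fun _ => none) some) (dedge s t z)) _
    (Equiv.refl _) e (by intro z; rw [h1]; simp), tutte_loops, card_EK]
  · congr 2
    funext z
    rcases z with ⟨i, k⟩ | z <;> rfl
  · intro e
    simp [dedge, kedge]

/-- component number of complete graph with hub joined to `S` -/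
noncomputable def hubRel {m : ℕ} (S : Finset (Fin m)) (B : Finset (EK m))
    (a b : Option (Fin m)) : Prop :=
  (∃ k ∈ S, s(none, some k) = s(a, b)) ∨ (∃ e ∈ B, Sym2.map some (kedge m e) = s(a, b))

noncomputable def hubC {m : ℕ} (S : Finset (Fin m)) (B : Finset (EK m)) : ℕ :=
  Nat.card (Quot (hubRel S B))

noncomputable def hubW {m : ℕ} (S : Finset (Fin m)) (B : Finset (EK m)) (x y : ℤ) : ℤ :=
  (x - 1) ^ (hubC S B - 1) * (y - 1) ^ (B.card + hubC S B - (m + 1 - S.card))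

theorem hubC_contr {s t m : ℕ} (σ : Fin s ⊕ Fin t ≃ Fin m) (S : Finset (Fin m))
    (hS : ∀ v, v ∈ S ↔ ∃ i, σ (Sum.inl i) = v) (B : Finset (EK m)) :
    hubC S B = nComp (fun e : EK m => Sym2.map (contr σ) (kedge m e)) B := by
  rw [nComp_eq]
  unfold hubC
  have hS' : ∀ i, Quot.mk (hubRel S B) (some (σ (Sum.inl i))) = Quot.mk (hubRel S B) none := by
    intro i
    have h : hubRel S B none (some (σ (Sum.inl i))) := Or.inl ⟨_, (hS _).2 ⟨i, rfl⟩, rfl⟩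
    exact (Quot.sound h).symm
  have hback : ∀ v : Fin m, Quot.mk (hubRel S B)
      ((contr σ v).map (fun j => σ (Sum.inr j))) = Quot.mk (hubRel S B) (some v) := by
    intro v
    obtain ⟨z, rfl⟩ := σ.surjective v
    rcases z with i | j
    · rw [hS']; simp [contr]
    · simp [contr]
  apply quot_card_eq (fun o : Option (Fin m) => o.elim none (contr σ))
    (fun o : Option (Fin t) => o.map (fun j => σ (Sum.inr j)))
  · rintro a b (⟨k, hk, h⟩ | ⟨e, he, h⟩)
    · obtain ⟨i, rfl⟩ := (hS k).1 hk
      rcases Sym2.eq_iff.1 h with ⟨rfl, rfl⟩ | ⟨rfl, rfl⟩ <;> simp [contr]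
    · refine Quot.sound ⟨e, he, ?_⟩
      have := congrArg (Sym2.map (fun o : Option (Fin m) => o.elim none (contr σ))) h
      rw [Sym2.map_map] at this
      exact this
  · rintro a b ⟨e, he, h⟩
    have h0 : Quot.mk (hubRel S B) (some e.1.1) = Quot.mk (hubRel S B) (some e.1.2) :=
      Quot.sound (Or.inr ⟨e, he, rfl⟩)
    rw [← hback, ← hback] at h0
    simp only [kedge, Sym2.map_mk] at h
    rcases Sym2.eq_iff.1 h with ⟨rfl, rfl⟩ | ⟨rfl, rfl⟩
    · exact h0
    · exact h0.symm
  · rintro (_ | v)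
    · rfl
    · exact hback v
  · rintro (_ | v)
    · rfl
    · simp [contr]

theorem exists_sigma {m : ℕ} (S : Finset (Fin m)) :
    ∃ σ : Fin S.card ⊕ Fin (m - S.card) ≃ Fin m, ∀ v, v ∈ S ↔ ∃ i, σ (Sum.inl i) = v := by
  have e2 : Fin (m - S.card) ≃ {v // ¬ v ∈ S} := by
    refine (Fintype.equivFinOfCardEq ?_).symm
    rw [Fintype.card_subtype_compl]
    simp
  refine ⟨(Equiv.sumCongr S.equivFin.symm e2).trans (Equiv.sumCompl (· ∈ S)), fun v => ?_⟩
  constructor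
  · intro hv
    exact ⟨S.equivFin ⟨v, hv⟩, by simp⟩
  · rintro ⟨i, rfl⟩
    simp

theorem hubW_sum {m : ℕ} (S : Finset (Fin m)) (x y : ℤ) :
    ∑ B, hubW S B x y = y ^ S.card.choose 2 * tutte (KCedge S.card (m - S.card)) x y := by
  obtain ⟨σ, hσ⟩ := exists_sigma S
  rw [← tutte_contr σ]
  unfold hubW tutte
  refine Finset.sum_congr rfl fun B _ => ?_
  have : S.card ≤ m := by simpa using S.card_le_univ
  rw [hubC_contr σ S hσ, Fintype.card_option, Fintype.card_fin,
    show m + 1 - S.card = m - S.card + 1 by omega]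

theorem hubC_bound {m : ℕ} (S : Finset (Fin m)) (B : Finset (EK m)) :
    m + 1 ≤ S.card + B.card + hubC S B := by
  obtain ⟨σ, hσ⟩ := exists_sigma S
  have h := card_le_nComp (fun e : EK m => Sym2.map (contr σ) (kedge m e)) B
  rw [← hubC_contr σ S hσ, Fintype.card_option, Fintype.card_fin] at h
  omega

theorem hub_empty {m : ℕ} (B : Finset (EK m)) :
    hubC ∅ B = nComp (kedge m) B + 1 := by
  rw [nComp_eq, ← Finite.card_option]
  refine Nat.card_congr
    { toFun := Quot.lift (fun o : Option (Fin m) => o.map (Quot.mk (erel (kedge m) B))) ?_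
      invFun := fun o => o.elim (Quot.mk _ none)
        (Quot.lift (fun v => Quot.mk _ (some v)) ?_)
      left_inv := ?_
      right_inv := ?_ }
  · rintro a b (⟨k, hk, h⟩ | ⟨e, he, h⟩)
    · simp at hk
    · have h0 : Quot.mk (erel (kedge m) B) e.1.1 = Quot.mk _ e.1.2 := Quot.sound ⟨e, he, rfl⟩
      simp only [kedge, Sym2.map_mk] at h
      rcases Sym2.eq_iff.1 h with ⟨rfl, rfl⟩ | ⟨rfl, rfl⟩ <;> simp [h0]
  · rintro a b ⟨e, he, h⟩
    exact Quot.sound (Or.inr ⟨e, he, by rw [h]; rfl⟩)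
  · rintro ⟨_ | v⟩ <;> rfl
  · rintro (_ | v)
    · rfl
    · induction v using Quot.ind
      rfl

theorem tutte_complete {m : ℕ} (hm : 1 ≤ m) (x y : ℤ) :
    tutte (kedge m) x y = tutte (KCedge 1 (m - 1)) x y := by
  let σ : Fin 1 ⊕ Fin (m - 1) ≃ Fin m := finSumFinEquiv.trans (finCongr (by omega))
  have h := tutte_contr σ x y
  simp only [show Nat.choose 1 2 = 0 from rfl, pow_zero, one_mul] at h
  rw [← h]
  have hb : Function.Bijective (contr σ) := by
    have : contr σ = (Sum.elim (fun _ => none) some : Fin 1 ⊕ Fin (m-1) → _) ∘ σ.symm := rfl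
    rw [this]
    refine Function.Bijective.comp ⟨?_, ?_⟩ σ.symm.bijective
    · rintro (a | a) (b | b) h
      · rw [Subsingleton.elim a b]
      · simp at h
      · simp at h
      · simpa using h
    · rintro (_ | a)
      · exact ⟨Sum.inl 0, rfl⟩
      · exact ⟨Sum.inr a, rfl⟩
  exact tutte_congr (kedge m) _ (Equiv.ofBijective _ hb) (Equiv.refl (EK m)) (fun e => rfl) x y

theorem hubW_sum_empty {m : ℕ} (hm : 1 ≤ m) (x y : ℤ) :
    ∑ B, hubW (∅ : Finset (Fin m)) B x y = (x - 1) * tutte (KCedge 1 (m - 1)) x y := by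
  rw [← tutte_complete hm]
  unfold hubW tutte
  rw [Finset.mul_sum]
  refine Finset.sum_congr rfl fun B _ => ?_
  have : Nonempty (Fin m) := ⟨⟨0, hm⟩⟩
  have h := nComp_pos (kedge m) B
  rw [hub_empty, Fintype.card_fin, Finset.card_empty,
    show nComp (kedge m) B + 1 - 1 = (nComp (kedge m) B - 1) + 1 by omega,
    show B.card + (nComp (kedge m) B + 1) - (m + 1 - 0) = B.card + nComp (kedge m) B - m by omega,
    pow_succ]
  ring

theorem sum_nonempty_pow (r : ℕ) (y : ℤ) :
    ∑ U : Finset (Fin r) with U.Nonempty, (y - 1) ^ (U.card - 1) = ∑ i ∈ range r, y ^ i := by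
  have h1 : ∑ U : Finset (Fin r) with U.Nonempty, (y - 1) ^ (U.card - 1)
      = ∑ U ∈ (univ : Finset (Fin r)).powerset,
        (fun k => if k = 0 then (0 : ℤ) else (y - 1) ^ (k - 1)) U.card := by
    rw [Finset.sum_filter, Finset.powerset_univ]
    refine Finset.sum_congr rfl fun U _ => ?_
    by_cases h : U.Nonempty
    · simp [h, h.ne_empty]
    · simp [Finset.not_nonempty_iff_eq_empty.1 h]
  rw [h1, Finset.sum_powerset_apply_card (fun k => if k = 0 then (0 : ℤ) else (y - 1) ^ (k - 1)), Finset.card_univ, Fintype.card_fin,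
    Finset.sum_range_succ']
  have h2 := congrArg (Polynomial.eval (y - 1))
    (Polynomial.geom_sum_X_comp_X_add_one_eq_sum (R := ℤ) r)
  simp only [Polynomial.eval_comp, Polynomial.eval_finsetSum, Polynomial.eval_pow,
    Polynomial.eval_add, Polynomial.eval_X, Polynomial.eval_one, Polynomial.eval_mul,
    Polynomial.eval_natCast, sub_add_cancel] at h2
  rw [h2]
  simp [mul_comm]

/-- splitting an edge set of `K_{n/r}` -/
def splitEquiv (r m : ℕ) :
    Finset ((Fin r × Fin m) ⊕ EK m) ≃ (Fin m → Finset (Fin r)) × Finset (EK m) where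
  toFun F := (fun k => univ.filter (fun i => Sum.inl (i, k) ∈ F),
    univ.filter (fun e => Sum.inr e ∈ F))
  invFun gB := (univ.filter (fun ik : Fin r × Fin m => ik.1 ∈ gB.1 ik.2)).disjSum gB.2
  left_inv F := by
    ext z
    rcases z with ⟨i, k⟩ | e <;> simp
  right_inv gB := by
    rcases gB with ⟨g, B⟩
    simp

theorem split_card {r m : ℕ} (F : Finset ((Fin r × Fin m) ⊕ EK m)) :
    F.card = ∑ k, ((splitEquiv r m F).1 k).card + (splitEquiv r m F).2.card := by
  have h : F.card = ∑ z, if z ∈ F then 1 else 0 := by simp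
  rw [h, Fintype.sum_sum_type, Fintype.sum_prod_type_right]
  simp only [splitEquiv, Equiv.coe_fn_mk, Finset.card_filter]

/-- support -/
def supp {r m : ℕ} (g : Fin m → Finset (Fin r)) : Finset (Fin m) :=
  univ.filter (fun k => (g k).Nonempty)

theorem split_nComp {r m : ℕ} (F : Finset ((Fin r × Fin m) ⊕ EK m)) :
    nComp (KCedge r m) F = hubC (supp (splitEquiv r m F).1) (splitEquiv r m F).2 := by
  rw [nComp_eq]
  unfold hubC
  have : erel (KCedge r m) F = hubRel (supp (splitEquiv r m F).1) (splitEquiv r m F).2 := by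
    funext a b
    apply propext
    constructor
    · rintro ⟨⟨i, k⟩ | e, he, h⟩
      · exact Or.inl ⟨k, by simpa [supp, splitEquiv, Finset.Nonempty] using ⟨i, he⟩, h⟩
      · exact Or.inr ⟨e, by simpa [splitEquiv] using he, h⟩
    · rintro (⟨k, hk, h⟩ | ⟨e, he, h⟩)
      · obtain ⟨i, hi⟩ : ∃ i, Sum.inl (i, k) ∈ F := by
          simpa [supp, splitEquiv, Finset.Nonempty] using hk
        exact ⟨Sum.inl (i, k), hi, h⟩
      · exact ⟨Sum.inr e, by simpa [splitEquiv] using he, h⟩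
  rw [this]

theorem supp_sum {r m : ℕ} (g : Fin m → Finset (Fin r)) :
    ∑ k, (g k).card = (supp g).card + ∑ k, ((g k).card - 1) := by
  unfold supp
  rw [Finset.card_filter, ← Finset.sum_add_distrib]
  refine Finset.sum_congr rfl fun k _ => ?_
  by_cases h : (g k).Nonempty
  · have := h.card_pos
    simp only [h, if_true]; omega
  · simp [Finset.not_nonempty_iff_eq_empty.1 h]

theorem tutte_split (r m : ℕ) (x y : ℤ) :
    tutte (KCedge r m) x y
      = ∑ S : Finset (Fin m), (∑ i ∈ range r, y ^ i) ^ S.card * ∑ B, hubW S B x y := by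
  have h1 : tutte (KCedge r m) x y = ∑ g : Fin m → Finset (Fin r),
      (∏ k, (y - 1) ^ ((g k).card - 1)) * ∑ B, hubW (supp g) B x y := by
    unfold tutte
    simp only [Finset.mul_sum]
    rw [← Fintype.sum_prod_type']
    refine Fintype.sum_equiv (splitEquiv r m) _ _ ?_
    intro F
    rw [split_nComp, split_card]
    generalize splitEquiv r m F = gB
    obtain ⟨g, B⟩ := gB
    simp only
    have hb := hubC_bound (supp g) B
    have hs := supp_sum g
    have hle : (supp g).card ≤ m := by simpa using (supp g).card_le_univ
    rw [Finset.prod_pow_eq_pow_sum, Fintype.card_option, Fintype.card_fin, hubW,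
      show ∑ k, (g k).card + B.card + hubC (supp g) B - (m + 1)
        = ∑ k, ((g k).card - 1) + (B.card + hubC (supp g) B - (m + 1 - (supp g).card)) by omega,
      pow_add]
    ring
  rw [h1, ← Finset.sum_fiberwise (s := univ) (g := supp)]
  refine Finset.sum_congr rfl fun S _ => ?_
  have h2 : ∀ g ∈ univ.filter (fun g : Fin m → Finset (Fin r) => supp g = S),
      (∏ k, (y - 1) ^ ((g k).card - 1)) * ∑ B, hubW (supp g) B x y
        = (∏ k, (y - 1) ^ ((g k).card - 1)) * ∑ B, hubW S B x y := by
    intro g hg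
    rw [(Finset.mem_filter.1 hg).2]
  rw [Finset.sum_congr rfl h2, ← Finset.sum_mul]
  congr 1
  have h3 : univ.filter (fun g : Fin m → Finset (Fin r) => supp g = S)
      = Fintype.piFinset (fun k => if k ∈ S then univ.filter (fun U : Finset (Fin r) => U.Nonempty)
          else {∅}) := by
    ext g
    simp only [Finset.mem_filter, Finset.mem_univ, true_and, Fintype.mem_piFinset, supp,
      Finset.ext_iff]
    refine forall_congr' fun k => ?_
    by_cases hk : k ∈ S
    · simp [hk]
    · simp [hk, Finset.not_nonempty_iff_eq_empty, Finset.eq_empty_iff_forall_notMem]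
  rw [h3, ← Finset.prod_univ_sum (f := fun _ U => (y - 1) ^ (Finset.card U - 1))]
  have h4 : ∀ k : Fin m, ∑ U ∈ (if k ∈ S then univ.filter (fun U : Finset (Fin r) => U.Nonempty)
      else {∅}), (y - 1) ^ (U.card - 1) = if k ∈ S then ∑ i ∈ range r, y ^ i else 1 := by
    intro k
    by_cases hk : k ∈ S
    · simp only [hk, if_true]; exact sum_nonempty_pow r y
    · simp [hk]
  simp only [h4]
  rw [Finset.prod_ite]
  simp

/-- **Theorem 1.** For all integers `n > r ≥ 1`,
`T_n^{(r)}(x,y) = ∑_{s=1}^{n-r} C(n-r,s) [r]_y^s y^(C(s,2)) T_{n-r}^{(s)}(x,y)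
  + (x-1) T_{n-r}^{(1)}(x,y)`, where `[r]_y = 1 + y + ⋯ + y^{r-1}`. -/
theorem tutte_contracted_complete_recurrence (n r : ℕ) (hr : 1 ≤ r) (hnr : r < n)
    (x y : ℤ) :
    TutteKC n r x y
      = (∑ s ∈ Icc 1 (n - r), ((n - r).choose s : ℤ) * (∑ i ∈ range r, y ^ i) ^ s *
          y ^ s.choose 2 * TutteKC (n - r) s x y)
        + (x - 1) * TutteKC (n - r) 1 x y := by
  rw [TutteKC, tutte_split]
  have hm : 1 ≤ n - r := by omega
  unfold TutteKC
  generalize n - r = m at hm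
  let f : ℕ → ℤ := fun s => if s = 0 then (x - 1) * tutte (KCedge 1 (m - 1)) x y else
    (∑ i ∈ range r, y ^ i) ^ s * (y ^ s.choose 2 * tutte (KCedge s (m - s)) x y)
  have h : ∀ S ∈ (univ : Finset (Fin m)).powerset,
      (∑ i ∈ range r, y ^ i) ^ S.card * ∑ B, hubW S B x y = f S.card := by
    intro S _
    by_cases hS : S = ∅
    · subst hS
      rw [hubW_sum_empty hm]
      simp [f]
    · rw [hubW_sum]
      simp [f, hS]
  rw [← Finset.powerset_univ, Finset.sum_congr rfl h, Finset.sum_powerset_apply_card,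
    Finset.card_univ, Fintype.card_fin, Finset.sum_range_succ']
  congr 1
  · rw [show Icc 1 m = Ico 1 (m + 1) by ext; simp, Finset.sum_Ico_eq_sum_range]
    simp only [Nat.add_sub_cancel]
    refine Finset.sum_congr rfl fun s _ => ?_
    rw [Nat.add_comm 1 s]
    simp only [f, Nat.succ_ne_zero, if_false, nsmul_eq_mul]
    ring
  · simp [f]
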